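/- arXiv:2406.09518 — 9 statements merged into one kernel-verified Lean document; each statement's English description precedes it below -/
import Mathlib

section
/- Let n ≥ 2 be an integer. Suppose P(x,y), Q(x), R(y) are polynomials with nonnegative integer coefficients, where P has degree at most n−2 in x and at most n−2 in y, Q and R have degree at most n−1, P is not the zero polynomial, and the polynomial identity P(x,y)·(1 + x + y) = Q(x)·(1 + y + y² + ⋯ + y^{n−1}) + R(y)·(1 + x + x² + ⋯ + x^{n−1}) holds. Then n is divisible by 3. -/
open MvPolynomial

lemma no_common_root (n : ℕ) (hn : 2 ≤ n) (h3 : ¬ 3 ∣ n) (z : ℂ)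
    (h1 : ∑ i ∈ Finset.range n, z ^ i = 0)
    (h2 : ∑ i ∈ Finset.range n, (-1 - z) ^ i = 0) : False := by
  have hz : z ^ n = 1 := by
    have := geom_sum_mul z n
    rw [h1, zero_mul] at this
    exact (sub_eq_zero.mp this.symm)
  have hw : (-1 - z) ^ n = 1 := by
    have := geom_sum_mul (-1 - z) n
    rw [h2, zero_mul] at this
    exact (sub_eq_zero.mp this.symm)
  have nz : ‖z‖ = 1 := Complex.norm_eq_one_of_pow_eq_one hz (by omega)
  have nw : ‖-1 - z‖ = 1 := Complex.norm_eq_one_of_pow_eq_one hw (by omega)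
  have cz : z * (starRingEnd ℂ) z = 1 := by rw [Complex.mul_conj']; simp [nz]
  have cw : (-1 - z) * (starRingEnd ℂ) (-1 - z) = 1 := by rw [Complex.mul_conj']; simp [nw]
  simp only [map_sub, map_neg, map_one] at cw
  have hq : z ^ 2 + z + 1 = 0 := by
    linear_combination z * cw - (z + 1) * cz
  have hz3 : z ^ 3 = 1 := by linear_combination (z - 1) * hq
  have hz1 : z ≠ 1 := by
    rintro rfl
    norm_num at hq
  have ho : orderOf z = 3 := by
    have : Fact (Nat.Prime 3) := ⟨Nat.prime_three⟩
    exact orderOf_eq_prime hz3 hz1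
  exact h3 (ho ▸ orderOf_dvd_of_pow_eq_one hz)

lemma eq_zero_of_eval_one (Q : Polynomial ℕ) (h : Q.eval 1 = 0) : Q = 0 := by
  rw [Polynomial.eval_eq_sum, Polynomial.sum] at h
  simp only [one_pow, mul_one, Finset.sum_eq_zero_iff, Polynomial.mem_support_iff] at h
  ext i
  by_contra hi
  exact hi (h i hi)

lemma eval_aeval_nat (Q : Polynomial ℕ) (A : Polynomial ℂ) (z : ℂ) (m : ℕ)
    (h : A.eval z = m) : (Polynomial.aeval A Q).eval z = ((Q.eval m : ℕ) : ℂ) := by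
  induction Q using Polynomial.induction_on' with
  | add p q hp hq => simp [hp, hq]
  | monomial k a => simp [Polynomial.aeval_monomial, h]

/-- If `P(x,y)`, `Q(x)`, `R(y)` are polynomials with nonnegative integer coefficients, `P ≠ 0`,
`P` has degree at most `n-2` in each variable, `Q` and `R` have degree at most `n-1`, and
`P(x,y)·(1+x+y) = Q(x)·(1+y+⋯+y^(n-1)) + R(y)·(1+x+⋯+x^(n-1))`, then `3 ∣ n`. -/
theorem usamo2021_p3_poly (n : ℕ) (hn : 2 ≤ n)
    (P : MvPolynomial (Fin 2) ℕ) (Q R : Polynomial ℕ)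
    (hPx : P.degreeOf 0 ≤ n - 2) (hPy : P.degreeOf 1 ≤ n - 2)
    (hQ : Q.natDegree ≤ n - 1) (hR : R.natDegree ≤ n - 1)
    (hP : P ≠ 0)
    (hid : P * (1 + X 0 + X 1) =
        Polynomial.aeval (X 0 : MvPolynomial (Fin 2) ℕ) Q * (∑ j ∈ Finset.range n, X 1 ^ j) +
        Polynomial.aeval (X 1 : MvPolynomial (Fin 2) ℕ) R * (∑ i ∈ Finset.range n, X 0 ^ i)) :
    3 ∣ n := by
  by_contra h3
  set S : Polynomial ℂ := ∑ i ∈ Finset.range n, Polynomial.X ^ i with hS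
  set L : Polynomial ℂ := -1 - Polynomial.X with hL
  have hid2 := congrArg (MvPolynomial.aeval (![Polynomial.X, L] : Fin 2 → Polynomial ℂ)) hid
  simp only [map_mul, map_add, map_one, map_sum, map_pow, MvPolynomial.aeval_X,
    ← Polynomial.aeval_algHom_apply, Matrix.cons_val_zero, Matrix.cons_val_one] at hid2
  rw [show (1 + Polynomial.X + L : Polynomial ℂ) = 0 by rw [hL]; ring, mul_zero, ← hS] at hid2
  have hcop : IsCoprime S (∑ i ∈ Finset.range n, L ^ i) := by
    rw [Polynomial.isCoprime_iff_aeval_ne_zero_of_isAlgClosed ℂ ℂ]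
    intro z
    by_contra! hc
    refine no_common_root n hn h3 z ?_ ?_
    · simpa [hS] using hc.1
    · simpa [hL] using hc.2
  have hdvd : S ∣ Polynomial.aeval (Polynomial.X : Polynomial ℂ) Q := by
    refine hcop.dvd_of_dvd_mul_right ?_
    exact ⟨-Polynomial.aeval L R, by linear_combination -hid2⟩
  have hSdeg : S.natDegree = n - 1 := by
    have : S.Monic := Polynomial.monic_geom_sum_X (by omega)
    have h2 := congrArg Polynomial.natDegree (geom_sum_mul (Polynomial.X : Polynomial ℂ) n)
    rw [← hS, show (Polynomial.X - 1 : Polynomial ℂ) = Polynomial.X - Polynomial.C 1 by simp,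
      this.natDegree_mul (Polynomial.monic_X_sub_C 1), Polynomial.natDegree_X_sub_C,
      show (Polynomial.X ^ n - 1 : Polynomial ℂ) = Polynomial.X ^ n - Polynomial.C 1 by simp,
      Polynomial.natDegree_X_pow_sub_C] at h2
    omega
  have hSne : S ≠ 0 := (Polynomial.monic_geom_sum_X (by omega)).ne_zero
  have hQmap : Polynomial.aeval (Polynomial.X : Polynomial ℂ) Q
      = Q.map (Nat.castRingHom ℂ) := by
    rw [Polynomial.aeval_def, Polynomial.map]
    congr 1
  obtain ⟨T, hT⟩ := hdvd
  have hTdeg : T.natDegree = 0 := by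
    by_cases hT0 : T = 0
    · simp [hT0]
    · have h1 := Polynomial.natDegree_mul hSne hT0
      rw [← hT, hQmap] at h1
      have h2 := Polynomial.natDegree_map_le (f := Nat.castRingHom ℂ) (p := Q)
      omega
  obtain ⟨c, rfl⟩ : ∃ c, T = Polynomial.C c := ⟨_, Polynomial.eq_C_of_natDegree_eq_zero hTdeg⟩
  have hR0 : Polynomial.aeval L R = - Polynomial.C c * ∑ i ∈ Finset.range n, L ^ i := by
    rw [hT] at hid2
    apply mul_right_cancel₀ hSne
    linear_combination -hid2
  have e1 : ((Q.eval 1 : ℕ) : ℂ) = n * c := by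
    have := congrArg (Polynomial.eval (1 : ℂ)) hT
    rw [eval_aeval_nat Q _ 1 1 (by simp)] at this
    rw [this, hS]
    simp [Polynomial.eval_finsetSum]
  have e2 : ((R.eval 1 : ℕ) : ℂ) = - (n * c) := by
    have := congrArg (Polynomial.eval (-2 : ℂ)) hR0
    rw [eval_aeval_nat R _ (-2) 1 (by rw [hL]; norm_num)] at this
    rw [this, hL]
    simp [Polynomial.eval_finsetSum]
    norm_num
    ring
  have e3 : Q.eval 1 + R.eval 1 = 0 := by
    have : ((Q.eval 1 + R.eval 1 : ℕ) : ℂ) = 0 := by push_cast; rw [e1, e2]; ring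
    exact_mod_cast this
  have hQ0 := eq_zero_of_eval_one Q (by omega)
  have hRz := eq_zero_of_eval_one R (by omega)
  rw [hQ0, hRz] at hid
  simp only [map_zero, zero_mul, add_zero] at hid
  rcases mul_eq_zero.mp hid with h | h
  · exact hP h
  · have := congrArg (MvPolynomial.eval (fun _ => (0 : ℕ))) h
    simp at this
end

section
/- Let S be a finite nonempty set of positive integers with the gcd-property. Then |S| is a power of 2, i.e., |S| = 2^k for some nonnegative integer k. -/
theorem card_eq_div (S : Finset ℕ) (hpos : ∀ s ∈ S, 0 < s)
    (hgcd : ∀ s ∈ S, ∀ d : ℕ, 0 < d → d ∣ s → ∃! t, t ∈ S ∧ Nat.gcd s t = d)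
    (s : ℕ) (hs : s ∈ S) : S.card = s.divisors.card := by
  have h0 := hpos s hs
  refine Finset.card_bij (fun t _ => Nat.gcd s t) ?_ ?_ ?_
  · intro t _
    exact Nat.mem_divisors.2 ⟨Nat.gcd_dvd_left _ _, h0.ne'⟩
  · intro a ha b hb hab
    exact (hgcd s hs _ (Nat.gcd_pos_of_pos_left a h0) (Nat.gcd_dvd_left _ _)).unique
      ⟨ha, rfl⟩ ⟨hb, hab.symm⟩
  · intro d hd
    have hd' := (Nat.mem_divisors.1 hd).1
    obtain ⟨t, ⟨h1, h2⟩, _⟩ := hgcd s hs d (Nat.pos_of_dvd_of_pos hd' h0) hd'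
    exact ⟨t, h1, h2⟩

theorem card_filter_eq (S : Finset ℕ) (hpos : ∀ s ∈ S, 0 < s)
    (hgcd : ∀ s ∈ S, ∀ d : ℕ, 0 < d → d ∣ s → ∃! t, t ∈ S ∧ Nat.gcd s t = d)
    (p : ℕ) (hp : p.Prime) (s : ℕ) (hs : s ∈ S) (hps : p ∣ s) :
    (S.filter (fun t => ¬ p ∣ t)).card = (s / p ^ s.factorization p).divisors.card := by
  have h0 := hpos s hs
  have hdvd : s / p ^ s.factorization p ∣ s := Nat.ordCompl_dvd s p
  have key : ∀ d, d ∣ s → ¬ p ∣ d → d ∣ s / p ^ s.factorization p := by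
    intro d hd hpd
    have hc : Nat.Coprime d (p ^ s.factorization p) :=
      Nat.Coprime.pow_right _ ((hp.coprime_iff_not_dvd.2 hpd).symm)
    refine hc.dvd_of_dvd_mul_left ?_
    rwa [Nat.ordProj_mul_ordCompl_eq_self]
  refine Finset.card_bij (fun t _ => Nat.gcd s t) ?_ ?_ ?_
  · intro t ht
    rw [Finset.mem_filter] at ht
    exact Nat.mem_divisors.2 ⟨key _ (Nat.gcd_dvd_left _ _)
      (fun h => ht.2 (h.trans (Nat.gcd_dvd_right _ _))), (Nat.ordCompl_pos p h0.ne').ne'⟩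
  · intro a ha b hb hab
    rw [Finset.mem_filter] at ha hb
    exact (hgcd s hs _ (Nat.gcd_pos_of_pos_left a h0) (Nat.gcd_dvd_left _ _)).unique
      ⟨ha.1, rfl⟩ ⟨hb.1, hab.symm⟩
  · intro d hd
    have hd1 := (Nat.mem_divisors.1 hd).1
    have hd' := hd1.trans hdvd
    obtain ⟨t, ⟨h1, h2⟩, _⟩ := hgcd s hs d (Nat.pos_of_dvd_of_pos hd' h0) hd'
    refine ⟨t, Finset.mem_filter.2 ⟨h1, fun h => ?_⟩, h2⟩
    have : p ∣ d := h2 ▸ Nat.dvd_gcd hps h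
    exact Nat.not_dvd_ordCompl hp h0.ne' (this.trans hd1)

theorem card_mul (S : Finset ℕ) (hpos : ∀ s ∈ S, 0 < s)
    (hgcd : ∀ s ∈ S, ∀ d : ℕ, 0 < d → d ∣ s → ∃! t, t ∈ S ∧ Nat.gcd s t = d)
    (p : ℕ) (hp : p.Prime) (s : ℕ) (hs : s ∈ S) (hps : p ∣ s) :
    S.card = (s.factorization p + 1) * (S.filter (fun t => ¬ p ∣ t)).card := by
  rw [card_filter_eq S hpos hgcd p hp s hs hps, card_eq_div S hpos hgcd s hs]
  have hc : Nat.Coprime (p ^ s.factorization p) (s / p ^ s.factorization p) :=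
    Nat.Coprime.pow_left _ (Nat.coprime_ordCompl hp (hpos s hs).ne')
  have h := hc.card_divisors_mul
  rw [Nat.ordProj_mul_ordCompl_eq_self, Nat.divisors_prime_pow hp] at h
  simpa using h

/-- If a finite nonempty set `S` of positive integers has the gcd-property (for each `s ∈ S` and
each positive divisor `d` of `s` there is a unique `t ∈ S` with `gcd s t = d`), then `|S|` is a
power of `2`. -/
theorem usamo2021_p4 (S : Finset ℕ) (hpos : ∀ s ∈ S, 0 < s) (hne : S.Nonempty)
    (hgcd : ∀ s ∈ S, ∀ d : ℕ, 0 < d → d ∣ s → ∃! t, t ∈ S ∧ Nat.gcd s t = d) :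
    ∃ k : ℕ, S.card = 2 ^ k := by
  obtain ⟨s, hs⟩ := hne
  have h0 := hpos s hs
  have main : ∀ p ∈ s.primeFactors, s.factorization p + 1 = 2 := by
    intro p hpm
    have hp := Nat.prime_of_mem_primeFactors hpm
    have hps := Nat.dvd_of_mem_primeFactors hpm
    obtain ⟨t, ⟨ht, hg⟩, _⟩ := hgcd s hs (s / p) (Nat.div_pos (Nat.le_of_dvd h0 hps) hp.pos)
      (Nat.div_dvd_of_dvd hps)
    have ht0 := hpos t ht
    have hf := congrArg (fun n => n.factorization p) hg
    simp only [Nat.factorization_gcd h0.ne' ht0.ne', Nat.factorization_div hps] at hf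
    simp only [Finsupp.inf_apply, Finsupp.coe_tsub, Pi.sub_apply, hp.factorization_self] at hf
    have h1 : 0 < s.factorization p := hp.factorization_pos_of_dvd h0.ne' hps
    have hft : t.factorization p = s.factorization p - 1 := by
      rcases min_choice (s.factorization p) (t.factorization p) with h | h <;> omega
    by_contra hcon
    have hpt : p ∣ t := Nat.dvd_of_factorization_pos (by omega)
    have e1 := card_mul S hpos hgcd p hp s hs hps
    have e2 := card_mul S hpos hgcd p hp t ht hpt
    have hS : 0 < S.card := Finset.card_pos.2 ⟨s, hs⟩
    have hF : 0 < (S.filter (fun t => ¬ p ∣ t)).card := by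
      rw [e1] at hS
      exact Nat.pos_of_mul_pos_left hS
    have := Nat.eq_of_mul_eq_mul_right hF (e1.symm.trans e2)
    omega
  refine ⟨s.primeFactors.card, ?_⟩
  rw [card_eq_div S hpos hgcd s hs, Nat.card_divisors h0.ne', Finset.prod_congr rfl main,
    Finset.prod_const]
end

section
/- Let k be a positive integer and let p₁, q₁, p₂, q₂, …, p_k, q_k be 2k pairwise distinct positive primes. For a subset I ⊆ {1,…,k}, let s(I) = ∏_{i ∈ I} p_i · ∏_{j ∉ I} q_j. Then the set S = { s(I) : I ⊆ {1,…,k} } has exactly 2^k elements and has the gcd-property. -/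
/-- Given `2k` pairwise distinct primes `p₁, q₁, …, p_k, q_k`, the set of products
`s(I) = ∏_{i ∈ I} p_i · ∏_{j ∉ I} q_j` over subsets `I ⊆ {1, …, k}` has exactly `2^k` elements
and has the gcd-property. -/
theorem usamo2021_p4_construction (k : ℕ) (hk : 0 < k) (p q : Fin k → ℕ)
    (hp : ∀ i, (p i).Prime) (hq : ∀ i, (q i).Prime)
    (hpinj : Function.Injective p) (hqinj : Function.Injective q)
    (hpq : ∀ i j, p i ≠ q j)
    (S : Finset ℕ)
    (hS : S = (Finset.univ : Finset (Finset (Fin k))).image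
        fun I => (∏ i ∈ I, p i) * ∏ j ∈ Iᶜ, q j) :
    S.card = 2 ^ k ∧
      ∀ s ∈ S, ∀ d : ℕ, 0 < d → d ∣ s → ∃! t, t ∈ S ∧ Nat.gcd s t = d := by
  classical
  obtain ⟨f, hf⟩ : ∃ f : Finset (Fin k) → ℕ,
      f = fun I => (∏ i ∈ I, p i) * ∏ j ∈ Iᶜ, q j := ⟨_, rfl⟩
  rw [← hf] at hS
  have hdvd : ∀ I x, x.Prime → (x ∣ f I ↔ (∃ i ∈ I, x = p i) ∨ ∃ i, i ∉ I ∧ x = q i) := by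
    intro I x hx
    rw [hf]
    simp only [hx.dvd_mul, hx.prime.dvd_finsetProd_iff, Finset.mem_compl,
      Nat.prime_dvd_prime_iff_eq hx (hp _), Nat.prime_dvd_prime_iff_eq hx (hq _)]
  have hpd : ∀ I i, p i ∣ f I ↔ i ∈ I := by
    intro I i
    rw [hdvd I _ (hp i)]
    constructor
    · rintro (⟨j, hj, h⟩ | ⟨j, hj, h⟩)
      · rwa [hpinj h]
      · exact absurd h (hpq i j)
    · exact fun h => Or.inl ⟨i, h, rfl⟩
  have hqd : ∀ I i, q i ∣ f I ↔ i ∉ I := by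
    intro I i
    rw [hdvd I _ (hq i)]
    constructor
    · rintro (⟨j, hj, h⟩ | ⟨j, hj, h⟩)
      · exact absurd h.symm (hpq j i)
      · rwa [hqinj h]
    · exact fun h => Or.inr ⟨i, h, rfl⟩
  have hinj : Function.Injective f := by
    intro I J h
    ext i
    rw [← hpd I, ← hpd J, h]
  have hsq : ∀ I, Squarefree (f I) := by
    intro I
    rw [hf]
    refine (Nat.squarefree_mul_iff).2 ⟨?_, ?_, ?_⟩
    · refine Nat.Coprime.prod_left fun i _ => Nat.Coprime.prod_right fun j _ => ?_
      exact (Nat.coprime_primes (hp i) (hq j)).2 (hpq i j)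
    · refine Finset.squarefree_prod_of_pairwise_isCoprime ?_ fun i _ => (hp i).prime.squarefree
      intro i _ j _ hij
      exact Nat.coprime_iff_isRelPrime.1 ((Nat.coprime_primes (hp i) (hp j)).2 (hpinj.ne hij))
    · refine Finset.squarefree_prod_of_pairwise_isCoprime ?_ fun i _ => (hq i).prime.squarefree
      intro i _ j _ hij
      exact Nat.coprime_iff_isRelPrime.1 ((Nat.coprime_primes (hq i) (hq j)).2 (hqinj.ne hij))
  subst hS
  refine ⟨by simp [Finset.card_image_of_injective _ hinj], ?_⟩
  intro s hs d hd hds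
  obtain ⟨I, -, rfl⟩ := Finset.mem_image.1 hs
  refine ⟨f (Finset.univ.filter fun i => if i ∈ I then p i ∣ d else ¬ q i ∣ d),
    ⟨Finset.mem_image_of_mem _ (Finset.mem_univ _), ?_⟩, ?_⟩
  · refine (Nat.Squarefree.ext_iff ((hsq I).squarefree_of_dvd (Nat.gcd_dvd_left _ _))
      ((hsq I).squarefree_of_dvd hds)).2 fun x hx => ?_
    rw [Nat.dvd_gcd_iff]
    constructor
    · rintro ⟨h1, h2⟩
      rcases (hdvd I x hx).1 h1 with ⟨i, hi, rfl⟩ | ⟨i, hi, rfl⟩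
      · simpa [hpd, hi] using h2
      · simpa [hqd, hi] using h2
    · intro h
      have h1 := h.trans hds
      refine ⟨h1, ?_⟩
      rcases (hdvd I x hx).1 h1 with ⟨i, hi, rfl⟩ | ⟨i, hi, rfl⟩
      · simpa [hpd, hi] using h
      · simpa [hqd, hi] using h
  · rintro t ⟨ht, hg⟩
    obtain ⟨K, -, rfl⟩ := Finset.mem_image.1 ht
    congr 1
    ext i
    subst hg
    by_cases hi : i ∈ I <;> simp [hi, Nat.dvd_gcd_iff, hpd, hqd]
end

section
/- Let S be a finite set of positive integers with the gcd-property, and suppose S has at least 2 elements. Then every element of S is squarefree, i.e., no element of S is divisible by the square of a prime. -/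
/-- Counting lemma: for `s = p ^ e * m` in `S` with `p ∤ m`, `e ≥ 1`, the size of `S` is `e + 1`
times the number of elements of `S` that are not divisible by `p`. -/
theorem gcd_property_count (S : Finset ℕ)
    (hgcd : ∀ s ∈ S, ∀ d : ℕ, 0 < d → d ∣ s → ∃! t, t ∈ S ∧ Nat.gcd s t = d)
    (p e m : ℕ) (hp : p.Prime) (he : 1 ≤ e) (hm : ¬ p ∣ m) (hs : p ^ e * m ∈ S) :
    S.card = (e + 1) * (S.filter (fun t => ¬ p ∣ t)).card := by
  have hm0 : m ≠ 0 := by rintro rfl; simp at hm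
  have hs0 : p ^ e * m ≠ 0 := mul_ne_zero (pow_ne_zero _ hp.ne_zero) hm0
  have hps : p ∣ p ^ e * m := (dvd_pow_self p (by omega)).mul_right m
  have inj : ∀ a ∈ S, ∀ b ∈ S, Nat.gcd (p ^ e * m) a = Nat.gcd (p ^ e * m) b → a = b := by
    intro a ha b hb hab
    obtain ⟨t, -, ht⟩ := hgcd _ hs (Nat.gcd (p ^ e * m) b)
      (Nat.gcd_pos_of_pos_left _ (Nat.pos_of_ne_zero hs0)) (Nat.gcd_dvd_left _ _)
    rw [ht a ⟨ha, hab⟩, ht b ⟨hb, rfl⟩]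
  have h1 : S.card = (p ^ e * m).divisors.card := by
    refine Finset.card_bij (fun t _ => Nat.gcd (p ^ e * m) t) ?_ ?_ ?_
    · intro a _
      exact Nat.mem_divisors.2 ⟨Nat.gcd_dvd_left _ _, hs0⟩
    · exact inj
    · intro d hd
      obtain ⟨t, ⟨ht, h⟩, -⟩ := hgcd _ hs d (Nat.pos_of_mem_divisors hd) (Nat.dvd_of_mem_divisors hd)
      exact ⟨t, ht, h⟩
  have h2 : (S.filter (fun t => ¬ p ∣ t)).card = m.divisors.card := by
    refine Finset.card_bij (fun t _ => Nat.gcd (p ^ e * m) t) ?_ ?_ ?_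
    · intro a ha
      have hpa := (Finset.mem_filter.1 ha).2
      refine Nat.mem_divisors.2 ⟨?_, hm0⟩
      have hc : Nat.Coprime (Nat.gcd (p ^ e * m) a) (p ^ e) :=
        (Nat.Coprime.pow_left e (((Nat.Prime.coprime_iff_not_dvd hp).2
          (fun h => hpa (h.trans (Nat.gcd_dvd_right _ _)))))).symm
      exact hc.dvd_of_dvd_mul_left (Nat.gcd_dvd_left _ _)
    · intro a ha b hb
      exact inj a (Finset.mem_filter.1 ha).1 b (Finset.mem_filter.1 hb).1
    · intro d hd
      have hdm := Nat.dvd_of_mem_divisors hd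
      obtain ⟨t, ⟨ht, h⟩, -⟩ := hgcd _ hs d (Nat.pos_of_mem_divisors hd) (hdm.mul_left _)
      refine ⟨t, Finset.mem_filter.2 ⟨ht, fun hpt => hm ?_⟩, h⟩
      exact ((Nat.dvd_gcd hps hpt).trans (dvd_of_eq h)).trans hdm
  have hc : Nat.Coprime (p ^ e) m := Nat.Coprime.pow_left e ((Nat.Prime.coprime_iff_not_dvd hp).2 hm)
  rw [h1, h2, hc.card_divisors_mul, Nat.divisors_prime_pow hp]
  simp


/-- If a finite set `S` of positive integers with at least two elements has the gcd-property,
then every element of `S` is squarefree. -/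
theorem usamo2021_p4_squarefree (S : Finset ℕ) (hpos : ∀ s ∈ S, 0 < s)
    (hcard : 2 ≤ S.card)
    (hgcd : ∀ s ∈ S, ∀ d : ℕ, 0 < d → d ∣ s → ∃! t, t ∈ S ∧ Nat.gcd s t = d) :
    ∀ s ∈ S, Squarefree s := by

  intro s hs
  rw [Nat.squarefree_iff_prime_squarefree]
  intro p hp hpp
  have hs0 : s ≠ 0 := (hpos s hs).ne'
  obtain ⟨e, m, hm, rfl⟩ := Nat.exists_eq_pow_mul_and_not_dvd hs0 p hp.ne_one
  have he : 2 ≤ e := by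
    have hc : Nat.Coprime (p ^ 2) m :=
      Nat.Coprime.pow_left 2 ((Nat.Prime.coprime_iff_not_dvd hp).2 hm)
    rw [← pow_two] at hpp
    exact (Nat.pow_dvd_pow_iff_le_right hp.one_lt).1 (hc.dvd_of_dvd_mul_right hpp)
  obtain ⟨t, ⟨ht, hg⟩, -⟩ := hgcd _ hs p hp.pos ((dvd_mul_right p p).trans hpp)
  obtain ⟨k, rfl⟩ : p ∣ t := (dvd_of_eq hg.symm).trans (Nat.gcd_dvd_right _ _)
  have hk : ¬ p ∣ k := by
    intro hk
    have h : p * p ∣ p := (Nat.dvd_gcd hpp (mul_dvd_mul_left p hk)).trans (dvd_of_eq hg)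
    have := Nat.le_of_dvd hp.pos h
    nlinarith [hp.two_le]
  have h1 := gcd_property_count S hgcd p e m hp (by omega) hm hs
  have h2 := gcd_property_count S hgcd p 1 k hp le_rfl hk (by simpa using ht)
  nlinarith
end

section
/- Let n ≥ 4 be an integer and let a₁, a₂, …, a_{2n} be positive real numbers (indices taken modulo 2n) satisfying, for every i = 1, 2, …, n, the equations a_{2i−1} = 1/a_{2i−2} + 1/a_{2i} and a_{2i} = a_{2i−1} + a_{2i+1} (where a₀ means a_{2n} and a_{2n+1} means a₁). Then a_{2i−1} = 1 and a_{2i} = 2 for all i = 1, 2, …, n. -/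
/-- USAMO 2021 Problem 5: if positive reals `a₁, …, a_{2n}` (indexed cyclically modulo `2n`,
with `n ≥ 4`) satisfy `a_{2i-1} = 1/a_{2i-2} + 1/a_{2i}` and `a_{2i} = a_{2i-1} + a_{2i+1}` for
all `i`, then all odd-indexed terms equal `1` and all even-indexed terms equal `2`. -/
theorem usamo2021_p5 (n : ℕ) (hn : 4 ≤ n) (a : ZMod (2 * n) → ℝ)
    (hpos : ∀ i, 0 < a i)
    (hodd : ∀ i : ℤ, a ((2 * i - 1 : ℤ) : ZMod (2 * n)) =
      1 / a ((2 * i - 2 : ℤ) : ZMod (2 * n)) + 1 / a ((2 * i : ℤ) : ZMod (2 * n)))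
    (heven : ∀ i : ℤ, a ((2 * i : ℤ) : ZMod (2 * n)) =
      a ((2 * i - 1 : ℤ) : ZMod (2 * n)) + a ((2 * i + 1 : ℤ) : ZMod (2 * n))) :
    (∀ i : ℤ, a ((2 * i - 1 : ℤ) : ZMod (2 * n)) = 1) ∧
      (∀ i : ℤ, a ((2 * i : ℤ) : ZMod (2 * n)) = 2) := by
  haveI : NeZero (2 * n) := ⟨by omega⟩
  obtain ⟨e, he⟩ : ∃ e : ℤ → ℝ, e = fun i : ℤ => a ((2 * i : ℤ) : ZMod (2 * n)) := ⟨_, rfl⟩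
  have hfin : (Set.range e).Finite := by
    apply (Set.finite_range a).subset
    rintro _ ⟨i, rfl⟩
    rw [he]
    exact ⟨_, rfl⟩
  have epos : ∀ i, 0 < e i := fun i => by rw [he]; exact hpos _
  have hb : ∀ i : ℤ, a ((2 * i - 1 : ℤ) : ZMod (2 * n)) = 1 / e (i - 1) + 1 / e i := by
    intro i
    have h := hodd i
    rw [show (2 * i - 2 : ℤ) = 2 * (i - 1) by ring] at h
    rw [he]
    exact h
  have hrec : ∀ i : ℤ, e i = 1 / e (i - 1) + 1 / e i + (1 / e i + 1 / e (i + 1)) := by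
    intro i
    have h := heven i
    have h2 := hb (i + 1)
    rw [show (2 * (i + 1) - 1 : ℤ) = 2 * i + 1 by ring, show i + 1 - 1 = i by ring] at h2
    rw [hb i, h2] at h
    rw [← h, he]
  obtain ⟨_, ⟨p, rfl⟩, hp⟩ := Set.exists_max_image _ id hfin ⟨e 0, 0, rfl⟩
  obtain ⟨_, ⟨q, rfl⟩, hq⟩ := Set.exists_min_image _ id hfin ⟨e 0, 0, rfl⟩
  have hM : ∀ i, e i ≤ e p := fun i => hp _ ⟨i, rfl⟩
  have hm : ∀ i, e q ≤ e i := fun i => hq _ ⟨i, rfl⟩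
  have up : ∀ i, 1 / e i ≤ 1 / e q := fun i => one_div_le_one_div_of_le (epos q) (hm i)
  have lo : ∀ i, 1 / e p ≤ 1 / e i := fun i => one_div_le_one_div_of_le (epos i) (hM i)
  have h1 : e p ≤ 2 * (1 / e p) + 2 * (1 / e q) := by
    linarith [hrec p, up (p - 1), up (p + 1)]
  have h2 : 2 * (1 / e q) + 2 * (1 / e p) ≤ e q := by
    linarith [hrec q, lo (q - 1), lo (q + 1)]
  have hpq : e p = e q := le_antisymm (by linarith) (hm p)
  have hall : ∀ i, e i = 2 := by
    have h4 : e p = 2 * (1 / e p) + 2 * (1 / e p) := by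
      rw [← hpq] at h1 h2
      linarith
    have hpp := epos p
    have h5 : e p = 2 := by
      field_simp at h4
      nlinarith
    intro i
    linarith [hM i, hm i]
  refine ⟨fun i => ?_, fun i => ?_⟩
  · rw [hb, hall, hall]; norm_num
  · have := hall i
    rw [he] at this
    exact this
end

section
/- Let n ≥ 2 be an integer and let b₁, b₂, …, b_n be positive real numbers (indices taken modulo n) satisfying b_i = 1/b_{i−1} + 2/b_i + 1/b_{i+1} for every i. Then b_i = 2 for all i. -/
/-- If positive reals `b₁, …, b_n` (indexed cyclically modulo `n`, with `n ≥ 2`) satisfy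
`b_i = 1/b_{i-1} + 2/b_i + 1/b_{i+1}` for every `i`, then `b_i = 2` for all `i`. -/
theorem usamo2021_p5_even_terms (n : ℕ) (hn : 2 ≤ n) (b : ZMod n → ℝ)
    (hpos : ∀ i, 0 < b i)
    (heq : ∀ i : ZMod n, b i = 1 / b (i - 1) + 2 / b i + 1 / b (i + 1)) :
    ∀ i : ZMod n, b i = 2 := by
  haveI : NeZero n := ⟨by omega⟩
  obtain ⟨p, hp⟩ := Finite.exists_max b
  obtain ⟨q, hq⟩ := Finite.exists_min b
  have hP := hpos p
  have hQ := hpos q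
  have h1 : b p ≤ 1 / b q + 2 / b p + 1 / b q := by
    have e := heq p
    have a1 := one_div_le_one_div_of_le hQ (hq (p - 1))
    have a2 := one_div_le_one_div_of_le hQ (hq (p + 1))
    linarith
  have h2 : 1 / b p + 2 / b q + 1 / b p ≤ b q := by
    have e := heq q
    have a1 := one_div_le_one_div_of_le (hpos (q - 1)) (hp (q - 1))
    have a2 := one_div_le_one_div_of_le (hpos (q + 1)) (hp (q + 1))
    linarith
  have h3 : b p * (b p * b q) ≤ 2 * b p + 2 * b q := by
    have := mul_le_mul_of_nonneg_right h1 (mul_pos hP hQ).le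
    have e : (1 / b q + 2 / b p + 1 / b q) * (b p * b q) = 2 * b p + 2 * b q := by
      field_simp
      ring
    linarith
  have h4 : 2 * b p + 2 * b q ≤ b q * (b p * b q) := by
    have := mul_le_mul_of_nonneg_right h2 (mul_pos hP hQ).le
    have e : (1 / b p + 2 / b q + 1 / b p) * (b p * b q) = 2 * b p + 2 * b q := by
      field_simp
      ring
    linarith
  have h5 : b p ≤ b q := le_of_mul_le_mul_right (h3.trans h4) (mul_pos hP hQ)
  have h6 : b p = b q := le_antisymm h5 (hq p)
  have h7 : b q = 2 := by
    rw [h6] at h3 h4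
    have h8 : b q * (b q * b q - 4) = 0 := by linarith
    have h9 := (mul_eq_zero.mp h8).resolve_left hQ.ne'
    nlinarith
  intro i
  have := hp i
  have := hq i
  linarith
end

section
/- Let n ≥ 2 be an integer and let a₁, a₂, …, a_{2n} be positive real numbers (indices taken modulo 2n) satisfying, for every i = 1, 2, …, n, the equations a_{2i−1} = 1/a_{2i−2} + 1/a_{2i} and a_{2i} = a_{2i−1} + a_{2i+1}. Then Σ_{i=1}^{n} a_{2i} = Σ_{i=1}^{n} 4/a_{2i}. -/
/-- For positive reals `a₁, …, a_{2n}` (indexed cyclically modulo `2n`, `n ≥ 2`) satisfying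
`a_{2i-1} = 1/a_{2i-2} + 1/a_{2i}` and `a_{2i} = a_{2i-1} + a_{2i+1}` for all `i`, the sum of
the even-indexed terms equals the sum of `4/a_{2i}`. -/
theorem usamo2021_p5_sum (n : ℕ) (hn : 2 ≤ n) (a : ZMod (2 * n) → ℝ)
    (hpos : ∀ i, 0 < a i)
    (hodd : ∀ i : ℤ, a ((2 * i - 1 : ℤ) : ZMod (2 * n)) =
      1 / a ((2 * i - 2 : ℤ) : ZMod (2 * n)) + 1 / a ((2 * i : ℤ) : ZMod (2 * n)))
    (heven : ∀ i : ℤ, a ((2 * i : ℤ) : ZMod (2 * n)) =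
      a ((2 * i - 1 : ℤ) : ZMod (2 * n)) + a ((2 * i + 1 : ℤ) : ZMod (2 * n))) :
    ∑ i ∈ Finset.Icc 1 n, a ((2 * i : ℕ) : ZMod (2 * n)) =
      ∑ i ∈ Finset.Icc 1 n, 4 / a ((2 * i : ℕ) : ZMod (2 * n)) := by
  have key : ∀ m : ℕ, ∑ i ∈ Finset.Icc 1 m, a ((2 * i : ℕ) : ZMod (2 * n)) =
      ∑ i ∈ Finset.Icc 1 m, 4 / a ((2 * i : ℕ) : ZMod (2 * n)) +
      ((1 / a ((2 * m + 2 : ℕ) : ZMod (2 * n)) - 1 / a ((2 * m : ℕ) : ZMod (2 * n))) -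
        (1 / a ((2 : ℕ) : ZMod (2 * n)) - 1 / a ((0 : ℕ) : ZMod (2 * n)))) := by
    intro m
    induction m with
    | zero => simp
    | succ k ih =>
      rw [Finset.sum_Icc_succ_top (by omega), Finset.sum_Icc_succ_top (by omega), ih]
      have h1 := heven ((k : ℤ) + 1)
      have h2 := hodd ((k : ℤ) + 1)
      have h3 := hodd ((k : ℤ) + 2)
      have e1 : ((2 * ((k : ℤ) + 2) - 1 : ℤ) : ZMod (2 * n)) =
          ((2 * ((k : ℤ) + 1) + 1 : ℤ) : ZMod (2 * n)) := by congr 1; ring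
      have e2 : ((2 * ((k : ℤ) + 2) - 2 : ℤ) : ZMod (2 * n)) =
          ((2 * (k + 1) : ℕ) : ZMod (2 * n)) := by push_cast; ring
      have e3 : ((2 * ((k : ℤ) + 2) : ℤ) : ZMod (2 * n)) =
          ((2 * (k + 1) + 2 : ℕ) : ZMod (2 * n)) := by push_cast; ring
      have e4 : ((2 * ((k : ℤ) + 1) - 2 : ℤ) : ZMod (2 * n)) =
          ((2 * k : ℕ) : ZMod (2 * n)) := by push_cast; ring
      have e5 : ((2 * ((k : ℤ) + 1) : ℤ) : ZMod (2 * n)) =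
          ((2 * (k + 1) : ℕ) : ZMod (2 * n)) := by push_cast; ring
      have e6 : ((2 * k + 2 : ℕ) : ZMod (2 * n)) =
          ((2 * (k + 1) : ℕ) : ZMod (2 * n)) := by congr 1
      rw [e1, e2, e3] at h3
      rw [e4, e5] at h2
      rw [e5] at h1
      rw [e6]
      have e7 : 4 / a ((2 * (k + 1) : ℕ) : ZMod (2 * n)) =
          4 * (1 / a ((2 * (k + 1) : ℕ) : ZMod (2 * n))) := by ring
      rw [e7]
      linarith
  have h := key n
  have f1 : ((2 * n : ℕ) : ZMod (2 * n)) = ((0 : ℕ) : ZMod (2 * n)) := by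
    rw [ZMod.natCast_self]; simp
  have f2 : ((2 * n + 2 : ℕ) : ZMod (2 * n)) = ((2 : ℕ) : ZMod (2 * n)) := by
    rw [Nat.cast_add, f1]; simp
  rw [f1, f2] at h
  linarith
end

section
/- Let ABCDEF be a convex hexagon in the Euclidean plane satisfying AB ∥ DE, BC ∥ EF, CD ∥ FA, and AB·DE = BC·EF = CD·FA. Let X, Y, Z be the midpoints of segments AD, BE, CF respectively, and assume X, Y, Z are not collinear; assume also that A, C, E are not collinear and B, D, F are not collinear. Then the orthocenter of triangle XYZ is the midpoint of the segment joining the circumcenter of triangle ACE and the circumcenter of triangle BDF. In particular, the circumcenter of triangle ACE, the circumcenter of triangle BDF, and the orthocenter of triangle XYZ are collinear. -/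
open EuclideanGeometry Affine

local notation "Pt" => EuclideanSpace ℝ (Fin 2)

/-- The four points `X`, `Y`, `Z`, `W` lie strictly on the same side of the line `PQ`. -/
def SameSideOfLine (P Q X Y Z W : EuclideanSpace ℝ (Fin 2)) : Prop :=
  (affineSpan ℝ {P, Q}).SSameSide X Y ∧ (affineSpan ℝ {P, Q}).SSameSide X Z ∧
    (affineSpan ℝ {P, Q}).SSameSide X W

/-- `ABCDEF` is a convex hexagon (vertices in this cyclic order): for each side, the four
remaining vertices lie strictly on the same side of the line containing that side. -/
def ConvexHexagon (A B C D E F : EuclideanSpace ℝ (Fin 2)) : Prop :=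
  SameSideOfLine A B C D E F ∧ SameSideOfLine B C D E F A ∧ SameSideOfLine C D E F A B ∧
    SameSideOfLine D E F A B C ∧ SameSideOfLine E F A B C D ∧ SameSideOfLine F A B C D E

lemma span_top (t : Triangle ℝ Pt) : affineSpan ℝ (Set.range t.points) = ⊤ := by
  rw [t.independent.affineSpan_eq_top_iff_card_eq_finrank_add_one]
  simp

lemma orth_aux (t : Triangle ℝ Pt) (H : Pt)
    (h0 : inner ℝ (t.points 1 - t.points 2) (H - t.points 0) = 0)
    (h1 : inner ℝ (t.points 2 - t.points 0) (H - t.points 1) = 0) : t.orthocenter = H := by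
  symm
  apply Triangle.eq_orthocenter_of_forall_mem_altitude (i₁ := 0) (i₂ := 1) (by decide)
  · rw [t.altitude_eq_mongePlane (i₂ := 1) (i₃ := 2) (by decide) (by decide) (by decide),
      Simplex.mongePlane_def, span_top]
    have hs : ({1, 2}ᶜ : Finset (Fin 3)) = {0} := by decide
    rw [hs, Finset.centroid_singleton]
    simpa [AffineSubspace.mem_mk', Submodule.mem_orthogonal_singleton_iff_inner_right] using h0
  · rw [t.altitude_eq_mongePlane (i₂ := 2) (i₃ := 0) (by decide) (by decide) (by decide),
      Simplex.mongePlane_def, span_top]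
    have hs : ({2, 0}ᶜ : Finset (Fin 3)) = {1} := by decide
    rw [hs, Finset.centroid_singleton]
    simpa [AffineSubspace.mem_mk', Submodule.mem_orthogonal_singleton_iff_inner_right] using h1

/-- Power of a point on a chord. -/
lemma stewart (Q A P R : Pt) (ρ : ℝ) (hP : dist P Q = ρ) (hR : dist R Q = ρ) (hPR : P ≠ R)
    (h : ∃ s : ℝ, R - A = s • (P - A)) :
    dist A Q ^ 2 = ρ ^ 2 + inner ℝ (P - A) (R - A) := by
  obtain ⟨s, hs⟩ := h
  have hs1 : 1 - s ≠ 0 := by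
    intro h0
    apply hPR
    have : s = 1 := by linarith
    rw [this, one_smul] at hs
    exact (sub_left_injective hs).symm
  have e1 : ρ ^ 2 = ‖(P - A) - (Q - A)‖ ^ 2 := by rw [← hP, dist_eq_norm]; congr 2; abel
  have e2 : ρ ^ 2 = ‖(R - A) - (Q - A)‖ ^ 2 := by rw [← hR, dist_eq_norm]; congr 2; abel
  rw [dist_comm, dist_eq_norm]
  rw [hs] at e2 ⊢
  rw [norm_sub_sq_real] at e1 e2
  rw [norm_smul, mul_pow, Real.norm_eq_abs, sq_abs, real_inner_smul_left] at e2
  rw [real_inner_smul_right, real_inner_self_eq_norm_sq]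
  apply mul_left_cancel₀ hs1
  linear_combination s * e1 - e2

lemma circ_aux (A B C D E F : Pt)
    (hpar₁ : ∃ r : ℝ, E - D = r • (B - A))
    (hpar₂ : ∃ r : ℝ, F - E = r • (C - B))
    (hpar₃ : ∃ r : ℝ, A - F = r • (D - C))
    (k₁ : inner ℝ (B - A) (E - D) = inner ℝ (C - B) (F - E))
    (k₂ : inner ℝ (C - B) (F - E) = inner ℝ (D - C) (A - F))
    (hXYZ : ¬Collinear ℝ ({midpoint ℝ A D, midpoint ℝ B E, midpoint ℝ C F} : Set Pt))
    (t : Triangle ℝ Pt) (h0 : t.points 0 = A) (h1 : t.points 1 = C) (h2 : t.points 2 = E) :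
    ∃ ρ : ℝ, dist (A + C - B) t.circumcenter = ρ ∧ dist (C + E - D) t.circumcenter = ρ ∧
      dist (E + A - F) t.circumcenter = ρ := by
  have hai : AffineIndependent ℝ ![C + E - D, A + C - B, E + A - F] := by
    have hX := affineIndependent_iff_not_collinear_set.2 hXYZ
    let f : Pt →ᵃ[ℝ] Pt := AffineMap.const ℝ Pt (A + C + E) - (2 : ℝ) • AffineMap.id ℝ Pt
    have hf : Function.Injective f := by
      intro x y hxy
      simpa [f] using hxy
    have := hX.map' f hf
    have he : ![C + E - D, A + C - B, E + A - F] =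
        f ∘ ![midpoint ℝ A D, midpoint ℝ B E, midpoint ℝ C F] := by
      ext i j
      fin_cases i <;> simp [f, midpoint_eq_smul_add] <;> ring
    rwa [he]
  set T : Triangle ℝ Pt := ⟨_, hai⟩ with hT
  have d0 : dist (C + E - D) T.circumcenter = T.circumradius :=
    T.dist_circumcenter_eq_circumradius 0
  have d1 : dist (A + C - B) T.circumcenter = T.circumradius :=
    T.dist_circumcenter_eq_circumradius 1
  have d2 : dist (E + A - F) T.circumcenter = T.circumradius :=
    T.dist_circumcenter_eq_circumradius 2
  have n01 : C + E - D ≠ A + C - B := by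
    have := hai.injective.ne (show (0 : Fin 3) ≠ 1 by decide); simpa using this
  have n12 : A + C - B ≠ E + A - F := by
    have := hai.injective.ne (show (1 : Fin 3) ≠ 2 by decide); simpa using this
  have n02 : C + E - D ≠ E + A - F := by
    have := hai.injective.ne (show (0 : Fin 3) ≠ 2 by decide); simpa using this
  obtain ⟨r, hr⟩ := hpar₁
  obtain ⟨s, hs⟩ := hpar₂
  obtain ⟨u, hu⟩ := hpar₃
  have pA := stewart T.circumcenter A _ _ _ d1 d2 n12
    ⟨-s, by linear_combination (norm := module) -hs⟩
  have pC := stewart T.circumcenter C _ _ _ d1 d0 n01.symm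
    ⟨-r, by linear_combination (norm := module) hr⟩
  have pE := stewart T.circumcenter E _ _ _ d0 d2 n02
    ⟨-u, by linear_combination (norm := module) hu⟩
  have iA : inner ℝ (A + C - B - A) (E + A - F - A) = -inner ℝ (C - B) (F - E) := by
    rw [← inner_neg_right]; congr 1 <;> abel
  have iC : inner ℝ (A + C - B - C) (C + E - D - C) = -inner ℝ (B - A) (E - D) := by
    rw [← inner_neg_left]; congr 1 <;> abel
  have iE : inner ℝ (C + E - D - E) (E + A - F - E) = -inner ℝ (D - C) (A - F) := by
    rw [← inner_neg_left]; congr 1 <;> abel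
  have eC : dist C T.circumcenter = dist A T.circumcenter := by
    rw [← sq_eq_sq₀ dist_nonneg dist_nonneg]; linarith
  have eE : dist E T.circumcenter = dist A T.circumcenter := by
    rw [← sq_eq_sq₀ dist_nonneg dist_nonneg]; linarith
  have hO : T.circumcenter = t.circumcenter := by
    apply t.eq_circumcenter_of_dist_eq (r := dist A T.circumcenter)
    · rw [span_top]; trivial
    · intro i
      fin_cases i
      · simp [h0]
      · simpa [h1] using eC
      · simpa [h2] using eE
  exact ⟨T.circumradius, hO ▸ d1, hO ▸ d0, hO ▸ d2⟩

/-- Two points at equal distance from `O`: perpendicular bisector condition. -/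
lemma bis_aux (P R O : Pt) (ρ : ℝ) (hP : dist P O = ρ) (hR : dist R O = ρ) :
    inner ℝ (P - R) (O + O - P - R) = 0 := by
  have h : ‖P - O‖ ^ 2 - ‖R - O‖ ^ 2 = 0 := by
    rw [← dist_eq_norm, ← dist_eq_norm, hP, hR, sub_self]
  have e1 : P - R = (P - O) - (R - O) := by abel
  have e2 : O + O - P - R = -((P - O) + (R - O)) := by abel
  rw [e1, e2, inner_neg_right, inner_sub_left, inner_add_right, inner_add_right,
    real_inner_self_eq_norm_sq, real_inner_self_eq_norm_sq, real_inner_comm (P - O) (R - O)]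
  linarith

/-- The cross product. -/
def crs (u v : Pt) : ℝ := u 0 * v 1 - u 1 * v 0

lemma same_aux (P Q X Y : Pt) (hPQ : P ≠ Q) (h : (affineSpan ℝ {P, Q}).SSameSide X Y) :
    0 < crs (Q - P) (X - P) * crs (Q - P) (Y - P) := by
  have key : ∀ W : Pt, W ∉ affineSpan ℝ {P, Q} → crs (Q - P) (W - P) ≠ 0 := by
    intro W hW h0
    apply hW
    have hd : (Q - P) 0 ^ 2 + (Q - P) 1 ^ 2 ≠ 0 := by
      intro hz
      apply hPQ
      have a0 : (Q - P) 0 = 0 := by nlinarith [sq_nonneg ((Q - P) 0), sq_nonneg ((Q - P) 1)]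
      have a1 : (Q - P) 1 = 0 := by nlinarith [sq_nonneg ((Q - P) 0), sq_nonneg ((Q - P) 1)]
      symm
      rw [← sub_eq_zero]
      ext i
      fin_cases i
      · exact a0
      · exact a1
    have : W = AffineMap.lineMap P Q
        (((W - P) 0 * (Q - P) 0 + (W - P) 1 * (Q - P) 1) / ((Q - P) 0 ^ 2 + (Q - P) 1 ^ 2)) := by
      rw [AffineMap.lineMap_apply]
      unfold crs at h0
      ext i
      fin_cases i <;> simp at h0 hd ⊢ <;> field_simp
      · linear_combination (-(Q 1 - P 1)) * h0
      · linear_combination (Q 0 - P 0) * h0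
    rw [this]
    exact AffineMap.lineMap_mem_affineSpan_pair _ _ _
  obtain ⟨⟨p₁, hp₁, p₂, hp₂, hr⟩, hX, hY⟩ := h
  have kX := key X hX
  have kY := key Y hY
  have mem : ∀ p ∈ affineSpan ℝ {P, Q}, ∀ W : Pt, crs (Q - P) (W - p) = crs (Q - P) (W - P) := by
    intro p hp W
    rw [mem_affineSpan_pair_iff_exists_lineMap_eq] at hp
    obtain ⟨c, rfl⟩ := hp
    simp [crs, AffineMap.lineMap_apply]
    ring
  rcases hr with h0 | h0 | ⟨a, b, ha, hb, hab⟩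
  · rw [vsub_eq_zero_iff_eq] at h0
    exact absurd (h0 ▸ hp₁) hX
  · rw [vsub_eq_zero_iff_eq] at h0
    exact absurd (h0 ▸ hp₂) hY
  · have : a * crs (Q - P) (X - P) = b * crs (Q - P) (Y - P) := by
      rw [← mem p₁ hp₁ X, ← mem p₂ hp₂ Y]
      have c0 := congrArg (fun v : Pt => v 0) hab
      have c1 := congrArg (fun v : Pt => v 1) hab
      simp at c0 c1
      simp only [crs, PiLp.sub_apply]
      linear_combination (Q 0 - P 0) * c1 - (Q 1 - P 1) * c0
    have hxy : crs (Q - P) (X - P) = b / a * crs (Q - P) (Y - P) := by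
      field_simp; linarith
    rw [hxy, mul_assoc]
    exact mul_pos (div_pos hb ha) (mul_self_pos.2 kY)

/-- Side lines that share a vertex: the two turns at the ends of a side have the same sign. -/
lemma turn_aux (P Q X W : Pt) (hPQ : P ≠ Q) (h : (affineSpan ℝ {P, Q}).SSameSide X W) :
    0 < crs (Q - P) (X - Q) * crs (P - W) (Q - P) := by
  have := same_aux P Q X W hPQ h
  have e1 : crs (Q - P) (X - Q) = crs (Q - P) (X - P) := by simp [crs]; ring
  have e2 : crs (P - W) (Q - P) = crs (Q - P) (W - P) := by simp [crs]; ring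
  rwa [e1, e2]

lemma crs_smul (a b : ℝ) (u v : Pt) : crs (a • u) (b • v) = a * b * crs u v := by
  simp [crs]; ring

lemma prod_aux (a b x y : ℝ) (ha : 0 < a * b) (hx : 0 ≤ x) (hy : 0 ≤ y)
    (h : |a| * x = |b| * y) : a * x = b * y := by
  rcases pos_and_pos_or_neg_and_neg_of_mul_pos ha with ⟨h1, h2⟩ | ⟨h1, h2⟩
  · rwa [abs_of_pos h1, abs_of_pos h2] at h
  · rw [abs_of_neg h1, abs_of_neg h2] at h; linarith

lemma len_aux (A B D E : Pt) (r : ℝ) (h : E - D = r • (B - A)) :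
    dist A B * dist D E = |r| * ‖B - A‖ ^ 2 := by
  rw [dist_comm A B, dist_comm D E, dist_eq_norm, dist_eq_norm, h, norm_smul, Real.norm_eq_abs]
  ring

lemma inv_aux (u v : Pt) (hu : v ≠ 0) (h : ∃ r : ℝ, v = r • u) : ∃ r : ℝ, u = r • v := by
  obtain ⟨r, rfl⟩ := h
  have : r ≠ 0 := by rintro rfl; simp at hu
  exact ⟨r⁻¹, by rw [smul_smul, inv_mul_cancel₀ this, one_smul]⟩

/-- USAMO 2021 Problem 6: for a convex hexagon `ABCDEF` with `AB ∥ DE`, `BC ∥ EF`, `CD ∥ FA`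
and `AB·DE = BC·EF = CD·FA`, with `X`, `Y`, `Z` the midpoints of `AD`, `BE`, `CF`, the
orthocenter of `XYZ` is the midpoint of the circumcenters of `ACE` and `BDF`; in particular
these three points are collinear. -/
theorem usamo2021_p6 (A B C D E F : Pt)
    (hconv : ConvexHexagon A B C D E F)
    (hpar₁ : ∃ r : ℝ, E - D = r • (B - A))
    (hpar₂ : ∃ r : ℝ, F - E = r • (C - B))
    (hpar₃ : ∃ r : ℝ, A - F = r • (D - C))
    (hlen₁ : dist A B * dist D E = dist B C * dist E F)
    (hlen₂ : dist B C * dist E F = dist C D * dist F A)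
    (hACE : ¬Collinear ℝ ({A, C, E} : Set Pt))
    (hBDF : ¬Collinear ℝ ({B, D, F} : Set Pt))
    (hXYZ : ¬Collinear ℝ ({midpoint ℝ A D, midpoint ℝ B E, midpoint ℝ C F} : Set Pt)) :
    Triangle.orthocenter (⟨![midpoint ℝ A D, midpoint ℝ B E, midpoint ℝ C F],
        affineIndependent_iff_not_collinear_set.2 hXYZ⟩ : Triangle ℝ Pt) =
      midpoint ℝ
        ((⟨![A, C, E], affineIndependent_iff_not_collinear_set.2 hACE⟩ :
          Triangle ℝ Pt).circumcenter)
        ((⟨![B, D, F], affineIndependent_iff_not_collinear_set.2 hBDF⟩ :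
          Triangle ℝ Pt).circumcenter) ∧
    Collinear ℝ ({(⟨![A, C, E], affineIndependent_iff_not_collinear_set.2 hACE⟩ :
          Triangle ℝ Pt).circumcenter,
        (⟨![B, D, F], affineIndependent_iff_not_collinear_set.2 hBDF⟩ :
          Triangle ℝ Pt).circumcenter,
        Triangle.orthocenter (⟨![midpoint ℝ A D, midpoint ℝ B E, midpoint ℝ C F],
          affineIndependent_iff_not_collinear_set.2 hXYZ⟩ :
          Triangle ℝ Pt)} : Set Pt) := by
  obtain ⟨⟨_, _, c1⟩, ⟨_, _, c2⟩, ⟨_, _, c3⟩, ⟨_, _, c4⟩, ⟨_, _, c5⟩, ⟨_, _, c6⟩⟩ := hconv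
  have nAB : A ≠ B := fun h => c2.right_notMem (h ▸ left_mem_affineSpan_pair ℝ _ _)
  have nBC : B ≠ C := fun h => c3.right_notMem (h ▸ left_mem_affineSpan_pair ℝ _ _)
  have nCD : C ≠ D := fun h => c4.right_notMem (h ▸ left_mem_affineSpan_pair ℝ _ _)
  have nDE : D ≠ E := fun h => c5.right_notMem (h ▸ left_mem_affineSpan_pair ℝ _ _)
  have nEF : E ≠ F := fun h => c6.right_notMem (h ▸ left_mem_affineSpan_pair ℝ _ _)
  have nFA : F ≠ A := fun h => c1.right_notMem (h ▸ left_mem_affineSpan_pair ℝ _ _)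
  have t1 := turn_aux _ _ _ _ nAB c1
  have t2 := turn_aux _ _ _ _ nBC c2
  have t3 := turn_aux _ _ _ _ nCD c3
  have t4 := turn_aux _ _ _ _ nDE c4
  have t5 := turn_aux _ _ _ _ nEF c5
  have hk : inner ℝ (B - A) (E - D) = inner ℝ (C - B) (F - E) ∧
      inner ℝ (C - B) (F - E) = inner ℝ (D - C) (A - F) := by
    obtain ⟨r, hr⟩ := hpar₁
    obtain ⟨s, hs⟩ := hpar₂
    obtain ⟨u, hu⟩ := hpar₃
    rw [len_aux _ _ _ _ _ hr, len_aux _ _ _ _ _ hs] at hlen₁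
    rw [len_aux _ _ _ _ _ hs, len_aux _ _ _ _ _ hu] at hlen₂
    have m1 : crs (E - D) (F - E) = r * s * crs (B - A) (C - B) := by rw [hr, hs, crs_smul]
    have m2 : crs (F - E) (A - F) = s * u * crs (C - B) (D - C) := by rw [hs, hu, crs_smul]
    generalize crs (B - A) (C - B) = x1 at *
    generalize crs (C - B) (D - C) = x2 at *
    generalize crs (D - C) (E - D) = x3 at *
    generalize crs (E - D) (F - E) = x4 at *
    generalize crs (F - E) (A - F) = x5 at *
    have hrs : 0 < r * s := by
      have h14 : 0 < x4 * x1 := by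
        by_contra hn
        have hp := mul_pos (mul_pos t2 t3) t4
        nlinarith [mul_nonneg (mul_self_nonneg x2) (mul_self_nonneg x3)]
      rw [m1] at h14
      by_contra hn
      nlinarith [mul_self_nonneg x1]
    have hsu : 0 < s * u := by
      have h25 : 0 < x5 * x2 := by
        by_contra hn
        have hp := mul_pos (mul_pos t3 t4) t5
        nlinarith [mul_nonneg (mul_self_nonneg x3) (mul_self_nonneg x4)]
      rw [m2] at h25
      by_contra hn
      nlinarith [mul_self_nonneg x2]
    rw [hr, hs, hu]
    simp only [real_inner_smul_right, real_inner_self_eq_norm_sq]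
    exact ⟨prod_aux _ _ _ _ hrs (by positivity) (by positivity) hlen₁,
      prod_aux _ _ _ _ hsu (by positivity) (by positivity) hlen₂⟩
  obtain ⟨k1, k2⟩ := hk
  obtain ⟨ρ, a1, a2, a3⟩ := circ_aux A B C D E F hpar₁ hpar₂ hpar₃ k1 k2 hXYZ
    (⟨![A, C, E], affineIndependent_iff_not_collinear_set.2 hACE⟩ : Triangle ℝ Pt) rfl rfl rfl
  have hpar₁' := inv_aux _ _ (sub_ne_zero.2 nDE.symm) hpar₁
  have hX' : ¬Collinear ℝ ({midpoint ℝ B E, midpoint ℝ C F, midpoint ℝ D A} : Set Pt) := by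
    convert hXYZ using 2
    rw [midpoint_comm D A]
    ext p
    simp only [Set.mem_insert_iff, Set.mem_singleton_iff]
    tauto
  obtain ⟨σ, b1, b2, b3⟩ := circ_aux B C D E F A hpar₂ hpar₃ hpar₁' k2
    (by rw [← k2, ← k1, real_inner_comm]) hX'
    (⟨![B, D, F], affineIndependent_iff_not_collinear_set.2 hBDF⟩ : Triangle ℝ Pt) rfl rfl rfl
  set O₁ := (⟨![A, C, E], affineIndependent_iff_not_collinear_set.2 hACE⟩ :
    Triangle ℝ Pt).circumcenter
  set O₂ := (⟨![B, D, F], affineIndependent_iff_not_collinear_set.2 hBDF⟩ :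
    Triangle ℝ Pt).circumcenter
  have main : Triangle.orthocenter (⟨![midpoint ℝ A D, midpoint ℝ B E, midpoint ℝ C F],
      affineIndependent_iff_not_collinear_set.2 hXYZ⟩ : Triangle ℝ Pt) = midpoint ℝ O₁ O₂ := by
    apply orth_aux
    · have p := bis_aux _ _ _ _ a3 a1
      have q := bis_aux _ _ _ _ b1 b2
      simp [inner, Fin.sum_univ_two, midpoint_eq_smul_add] at p q ⊢
      linear_combination (p + q) / 8
    · have p := bis_aux _ _ _ _ a2 a3
      have q := bis_aux _ _ _ _ b3 b1
      simp [inner, Fin.sum_univ_two, midpoint_eq_smul_add] at p q ⊢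
      linear_combination (p + q) / 8
  refine ⟨main, ?_⟩
  rw [main]
  have : Collinear ℝ ({midpoint ℝ O₁ O₂, O₁, O₂} : Set Pt) :=
    collinear_insert_of_mem_affineSpan_pair
      (AffineMap.lineMap_mem_affineSpan_pair _ _ _)
  convert this using 1
  ext p
  simp only [Set.mem_insert_iff, Set.mem_singleton_iff]
  tauto
end

section
/- Let ABCDEF be a convex hexagon in the Euclidean plane satisfying AB ∥ DE, BC ∥ EF, CD ∥ FA, and AB·DE = BC·EF = CD·FA, with A, C, E not collinear, and define A′ = C + E − D, C′ = E + A − F, E′ = A + C − B (so that CDEA′, EFAC′, and ABCE′ are parallelograms). If A′, C′, E′ are not collinear, then the circumcenter of triangle ACE coincides with the circumcenter of triangle A′C′E′. -/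
open EuclideanGeometry Affine

local notation "Pt" => EuclideanSpace ℝ (Fin 2)

/-- Twice the signed area of the triangle `PQX`. -/
def sarea (P Q X : EuclideanSpace ℝ (Fin 2)) : ℝ :=
  (Q 0 - P 0) * (X 1 - P 1) - (Q 1 - P 1) * (X 0 - P 0)

theorem mem_line_of_sarea {P Q X : EuclideanSpace ℝ (Fin 2)} (h : P ≠ Q)
    (h0 : sarea P Q X = 0) : X ∈ affineSpan ℝ ({P, Q} : Set (EuclideanSpace ℝ (Fin 2))) := by
  rw [mem_affineSpan_pair_iff_exists_lineMap_eq]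
  unfold sarea at h0
  have hne : (Q 0 - P 0) ^ 2 + (Q 1 - P 1) ^ 2 ≠ 0 := by
    intro hz
    apply h
    ext i
    fin_cases i <;> simp <;> nlinarith [sq_nonneg (Q 0 - P 0), sq_nonneg (Q 1 - P 1)]
  refine ⟨((Q 0 - P 0) * (X 0 - P 0) + (Q 1 - P 1) * (X 1 - P 1)) /
    ((Q 0 - P 0) ^ 2 + (Q 1 - P 1) ^ 2), ?_⟩
  ext i
  fin_cases i
  · simp [AffineMap.lineMap_apply]
    field_simp
    linear_combination (Q 1 - P 1) * h0
  · simp [AffineMap.lineMap_apply]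
    field_simp
    linear_combination (-(Q 0 - P 0)) * h0

theorem sarea_pos {P Q X Y : EuclideanSpace ℝ (Fin 2)} (h : P ≠ Q)
    (hs : (affineSpan ℝ {P, Q}).SSameSide X Y) : 0 < sarea P Q X * sarea P Q Y := by
  obtain ⟨⟨p1, hp1, p2, hp2, hr⟩, hX, hY⟩ := hs
  have hX0 : sarea P Q X ≠ 0 := fun h0 => hX (mem_line_of_sarea h h0)
  have hY0 : sarea P Q Y ≠ 0 := fun h0 => hY (mem_line_of_sarea h h0)
  rcases hr with h1 | h1 | ⟨r1, r2, hr1, hr2, h1⟩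
  · rw [vsub_eq_zero_iff_eq] at h1
    exact absurd (h1 ▸ hp1) hX
  · rw [vsub_eq_zero_iff_eq] at h1
    exact absurd (h1 ▸ hp2) hY
  · rw [mem_affineSpan_pair_iff_exists_lineMap_eq] at hp1 hp2
    obtain ⟨a, rfl⟩ := hp1
    obtain ⟨b, rfl⟩ := hp2
    have e0 := congrArg (fun v : EuclideanSpace ℝ (Fin 2) => v 0) h1
    have e1 := congrArg (fun v : EuclideanSpace ℝ (Fin 2) => v 1) h1
    simp [AffineMap.lineMap_apply] at e0 e1
    have key : r1 * sarea P Q X = r2 * sarea P Q Y := by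
      unfold sarea
      linear_combination (Q 0 - P 0) * e1 - (Q 1 - P 1) * e0
    have h2 : r1 * (sarea P Q X * sarea P Q Y) = r2 * sarea P Q Y ^ 2 := by
      linear_combination sarea P Q Y * key
    have h3 : 0 < r2 * sarea P Q Y ^ 2 := by positivity
    rw [← h2] at h3
    exact (mul_pos_iff_of_pos_left hr1).1 h3

theorem sarea_rot (P Q X : EuclideanSpace ℝ (Fin 2)) : sarea Q X P = sarea P Q X := by
  unfold sarea; ring

theorem same_trans {a b c : ℝ} (h : 0 < a * b) (h' : 0 < b * c) : 0 < a * c := by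
  have hb : b ≠ 0 := by rintro rfl; simp at h
  have h1 : 0 < (a * c) * b ^ 2 := by
    have := mul_pos h h'
    linarith [show a * b * (b * c) = a * c * b ^ 2 by ring]
  exact (mul_pos_iff_of_pos_right (by positivity)).1 h1

theorem ratio_neg {A B C D E F : EuclideanSpace ℝ (Fin 2)} (hconv : ConvexHexagon A B C D E F)
    {r : ℝ} (hr : E - D = r • (B - A)) : r < 0 := by
  obtain ⟨⟨h1, -, -⟩, ⟨-, -, h2⟩, ⟨-, -, h3⟩, ⟨h4, -, h4'⟩, -, -⟩ := id hconv
  have hAB : A ≠ B := by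
    rintro rfl
    exact h2.2.2 (left_mem_affineSpan_pair ℝ _ _)
  have hBC : B ≠ C := by
    rintro rfl
    exact h1.2.1 (right_mem_affineSpan_pair ℝ _ _)
  have hCD : C ≠ D := by
    rintro rfl
    exact h2.2.1 (right_mem_affineSpan_pair ℝ _ _)
  have hDE : D ≠ E := by
    rintro rfl
    exact h3.2.1 (right_mem_affineSpan_pair ℝ _ _)
  have k1 := sarea_pos hAB h1
  have k2 := sarea_pos hBC h2
  have k3 := sarea_pos hCD h3
  have k4 := same_trans ((mul_comm _ _).trans_gt (sarea_pos hDE h4)) (sarea_pos hDE h4')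
  rw [sarea_rot A B C] at k2
  rw [sarea_rot B C D] at k3
  rw [sarea_rot C D E] at k4
  have k := same_trans (same_trans (same_trans k4 k3) k2) k1
  have e0 := congrArg (fun v : EuclideanSpace ℝ (Fin 2) => v 0) hr
  have e1 := congrArg (fun v : EuclideanSpace ℝ (Fin 2) => v 1) hr
  simp at e0 e1
  have key : sarea D E A = -r * sarea A B D := by
    unfold sarea
    linear_combination (A 1 - D 1) * e0 - (A 0 - D 0) * e1
  rw [key] at k
  by_contra hc
  push Not at hc
  nlinarith [mul_nonneg hc (sq_nonneg (sarea A B D))]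

theorem power_eq (P X Y O : EuclideanSpace ℝ (Fin 2)) {r : ℝ} (hr : r < 0)
    (h : X - P = (-r) • (Y - P)) (hne : X ≠ Y) (hd : dist X O = dist Y O) :
    dist P O ^ 2 = dist X O ^ 2 + ‖X - P‖ * ‖Y - P‖ := by
  have hX : X = P + (-r) • (Y - P) := by rw [← h]; abel
  have hr1 : r + 1 ≠ 0 := by
    intro h1
    apply hne
    rw [hX, show -r = 1 by linarith]
    simp
  have hn : ‖X - P‖ * ‖Y - P‖ = (-r) * ‖Y - P‖ ^ 2 := by
    rw [h, norm_smul, Real.norm_of_nonneg (by linarith)]; ring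
  rw [hn]
  have hd2 : dist X O ^ 2 = dist Y O ^ 2 := by rw [hd]
  rw [hd2]
  have e0 := congrArg (fun v : EuclideanSpace ℝ (Fin 2) => v 0) hX
  have e1 := congrArg (fun v : EuclideanSpace ℝ (Fin 2) => v 1) hX
  simp only [EuclideanSpace.dist_sq_eq, EuclideanSpace.norm_sq_eq, Fin.sum_univ_two,
    Real.dist_eq, Real.norm_eq_abs, sq_abs] at hd2 ⊢
  simp at e0 e1 ⊢
  rw [e0, e1] at hd2
  apply mul_left_cancel₀ hr1
  linear_combination hd2

theorem convexHexagon_rot {A B C D E F : EuclideanSpace ℝ (Fin 2)}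
    (h : ConvexHexagon A B C D E F) : ConvexHexagon B C D E F A :=
  ⟨h.2.1, h.2.2.1, h.2.2.2.1, h.2.2.2.2.1, h.2.2.2.2.2, h.1⟩

/-- For a convex hexagon `ABCDEF` as in USAMO 2021 Problem 6, with `A′ = C + E − D`,
`C′ = E + A − F`, `E′ = A + C − B`, the circumcenters of `ACE` and `A′C′E′` coincide. -/
theorem usamo2021_p6_circumcenters (A B C D E F : Pt)
    (hconv : ConvexHexagon A B C D E F)
    (hpar₁ : ∃ r : ℝ, E - D = r • (B - A))
    (hpar₂ : ∃ r : ℝ, F - E = r • (C - B))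
    (hpar₃ : ∃ r : ℝ, A - F = r • (D - C))
    (hlen₁ : dist A B * dist D E = dist B C * dist E F)
    (hlen₂ : dist B C * dist E F = dist C D * dist F A)
    (hACE : ¬Collinear ℝ ({A, C, E} : Set Pt))
    (hA'C'E' : ¬Collinear ℝ ({C + E - D, E + A - F, A + C - B} : Set Pt)) :
    (⟨![A, C, E], affineIndependent_iff_not_collinear_set.2 hACE⟩ :
        Triangle ℝ Pt).circumcenter =
      (⟨![C + E - D, E + A - F, A + C - B],
        affineIndependent_iff_not_collinear_set.2 hA'C'E'⟩ : Triangle ℝ Pt).circumcenter := by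
  obtain ⟨r₁, h₁⟩ := hpar₁
  obtain ⟨r₂, h₂⟩ := hpar₂
  obtain ⟨r₃, h₃⟩ := hpar₃
  have n₁ : r₁ < 0 := ratio_neg hconv h₁
  have n₂ : r₂ < 0 := ratio_neg (convexHexagon_rot hconv) h₂
  have n₃ : r₃ < 0 := ratio_neg (convexHexagon_rot (convexHexagon_rot hconv)) h₃
  set T : Triangle ℝ Pt := ⟨![C + E - D, E + A - F, A + C - B],
        affineIndependent_iff_not_collinear_set.2 hA'C'E'⟩ with hT
  have hinj := T.independent.injective
  have d0 : dist (C + E - D) T.circumcenter = T.circumradius :=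
    T.dist_circumcenter_eq_circumradius 0
  have d1 : dist (E + A - F) T.circumcenter = T.circumradius :=
    T.dist_circumcenter_eq_circumradius 1
  have d2 : dist (A + C - B) T.circumcenter = T.circumradius :=
    T.dist_circumcenter_eq_circumradius 2
  have n02 : C + E - D ≠ A + C - B := hinj.ne (show (0 : Fin 3) ≠ 2 by decide)
  have n12 : E + A - F ≠ A + C - B := hinj.ne (show (1 : Fin 3) ≠ 2 by decide)
  have n10 : E + A - F ≠ C + E - D := hinj.ne (show (1 : Fin 3) ≠ 0 by decide)
  have pC := power_eq C (C + E - D) (A + C - B) T.circumcenter n₁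
    (by rw [show C + E - D - C = E - D by abel, h₁]; module) n02 (d0.trans d2.symm)
  have pA := power_eq A (E + A - F) (A + C - B) T.circumcenter n₂
    (by rw [show E + A - F - A = -(F - E) by abel, h₂]; module) n12 (d1.trans d2.symm)
  have pE := power_eq E (E + A - F) (C + E - D) T.circumcenter n₃
    (by rw [show E + A - F - E = A - F by abel, h₃]; module) n10 (d1.trans d0.symm)
  rw [d0, show C + E - D - C = E - D by abel, show A + C - B - C = A - B by abel,
    ← dist_eq_norm, ← dist_eq_norm, dist_comm E D] at pC
  rw [d1, show E + A - F - A = E - F by abel, show A + C - B - A = C - B by abel,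
    ← dist_eq_norm, ← dist_eq_norm, dist_comm C B] at pA
  rw [d1, show E + A - F - E = A - F by abel, show C + E - D - E = C - D by abel,
    ← dist_eq_norm, ← dist_eq_norm, dist_comm A F] at pE
  have qC : dist C T.circumcenter = dist A T.circumcenter :=
    (sq_eq_sq₀ dist_nonneg dist_nonneg).1 (by rw [pC, pA]; linarith)
  have qE : dist E T.circumcenter = dist A T.circumcenter :=
    (sq_eq_sq₀ dist_nonneg dist_nonneg).1 (by rw [pE, pA]; linarith)
  symm
  refine Affine.Simplex.eq_circumcenter_of_dist_eq (⟨![A, C, E],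
    affineIndependent_iff_not_collinear_set.2 hACE⟩ : Triangle ℝ Pt)
    (p := T.circumcenter) ?_ (r := dist A T.circumcenter) ?_
  · have := (affineIndependent_iff_not_collinear_set.2
      hACE).affineSpan_eq_top_iff_card_eq_finrank_add_one.2 (by simp)
    simp only
    rw [this]
    trivial
  · intro i
    fin_cases i
    · rfl
    · exact qC
    · exact qE
end
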